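/- Let A ∈ S_n^{>0} be a totally positive n×n real skew-symmetric matrix, and let I ⊆ {1,…,n} be a subset of even size. Then sgn(I,[n]) · Pf_I(A) > 0; that is, the Pfaffian Pf_I(A) is nonzero and has sign (−1)^{(Σ_{i∈I} i) − |I|(|I|+1)/2}. -/

import Mathlib

noncomputable section

open Matrix

/-- `N = n(n-1)/2`, the number of parameters. -/
def Npar (n : ℕ) : ℕ := n * (n - 1) / 2

/-- The decreasing run `a, a-1, …, b` (empty if `b > a`). -/
def decRun (a b : ℕ) : List ℕ := (List.range' b (a + 1 - b)).reverse

/-- The index sequence `(i_1, …, i_N)`: for `m = 1, …, ⌊n/2⌋` (here `m` is 0-based, so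
`m+1` is the 1-based block index), concatenate `n`, the run `n-2, …, 2(m+1)-1`, and the
run `n-1, …, 2(m+1)`. -/
def wordD (n : ℕ) : List ℕ :=
  ((List.range (n / 2)).map (fun m =>
    n :: (decRun (n - 2) (2 * m + 1) ++ decRun (n - 1) (2 * m + 2)))).flatten

/-- The matrix `x_i(t)` (index `i` is 1-based, matrix positions are 1-based in the paper,
0-based here). -/
def xMat (n : ℕ) (i : ℕ) (t : ℝ) : Matrix (Fin (2 * n)) (Fin (2 * n)) ℝ :=
  Matrix.of fun p q =>
    (if (p : ℕ) = (q : ℕ) then 1 else 0) +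
    (if i < n then
        (if (p : ℕ) + 1 = i ∧ (q : ℕ) + 1 = i + 1 then t else 0)
      + (if (p : ℕ) + 1 = n + i + 1 ∧ (q : ℕ) + 1 = n + i then -t else 0)
     else
        (if (p : ℕ) + 1 = n - 1 ∧ (q : ℕ) + 1 = 2 * n then t else 0)
      + (if (p : ℕ) + 1 = n ∧ (q : ℕ) + 1 = 2 * n - 1 then -t else 0))

/-- The product `x_{i_1}(t_1) ⋯ x_{i_N}(t_N)`; the parameter `t l` plays the role of
`t_{l+1}`. -/
def prodX (n : ℕ) (t : ℕ → ℝ) : Matrix (Fin (2 * n)) (Fin (2 * n)) ℝ :=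
  ((List.range (Npar n)).map (fun l => xMat n ((wordD n).getD l 0) (t l))).prod

/-- The first block `X₁(t)` of the first `n` rows of the product. -/
def X1 (n : ℕ) (t : ℕ → ℝ) : Matrix (Fin n) (Fin n) ℝ :=
  Matrix.of fun p q =>
    prodX n t ⟨(p : ℕ), by have := p.isLt; omega⟩ ⟨(q : ℕ), by have := q.isLt; omega⟩

/-- The second block `X₂(t)` of the first `n` rows of the product. -/
def X2 (n : ℕ) (t : ℕ → ℝ) : Matrix (Fin n) (Fin n) ℝ :=
  Matrix.of fun p q =>
    prodX n t ⟨(p : ℕ), by have := p.isLt; omega⟩ ⟨n + (q : ℕ), by have := q.isLt; omega⟩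

/-- The skew-symmetric matrix `A(t) = X₁(t)⁻¹ · X₂(t)`. -/
def Amat (n : ℕ) (t : ℕ → ℝ) : Matrix (Fin n) (Fin n) ℝ := (X1 n t)⁻¹ * X2 n t

/-- The set `S_n^{>0}` of totally positive skew-symmetric matrices. -/
def Spos (n : ℕ) : Set (Matrix (Fin n) (Fin n) ℝ) :=
  { A | ∃ t : ℕ → ℝ, (∀ i < Npar n, 0 < t i) ∧ A = Amat n t }

/-- The signed minor `M_{j,k}(A)`: `(-1)^{jk}` times the determinant of the submatrix of `A`
with (1-based) rows `{1,…,n-k-1} ∪ {n-k+j,…,n}` and columns `{1,…,n-j}`. -/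
def Mminor (n j k : ℕ) (A : Matrix (Fin n) (Fin n) ℝ) : ℝ :=
  (-1 : ℝ) ^ (j * k) *
    Matrix.det (Matrix.of fun (p q : Fin (n - j)) =>
      A (if (p : ℕ) < n - k - 1
          then ⟨(p : ℕ), by have := p.isLt; omega⟩
          else ⟨(p : ℕ) + j, by have := p.isLt; omega⟩)
        ⟨(q : ℕ), by have := q.isLt; omega⟩)

/-- The Pfaffian of an `m × m` matrix (intended for `m` even):
`Pf(B) = (1/(2^{m/2} (m/2)!)) Σ_σ sgn(σ) Π_i B_{σ(2i-1), σ(2i)}`. -/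
def Pfaff {m : ℕ} (B : Matrix (Fin m) (Fin m) ℝ) : ℝ :=
  (1 / ((2 : ℝ) ^ (m / 2) * (Nat.factorial (m / 2) : ℝ))) *
    ∑ σ : Equiv.Perm (Fin m), ((Equiv.Perm.sign σ : ℤ) : ℝ) *
      ∏ i : Fin (m / 2),
        B (σ ⟨2 * (i : ℕ), by have := i.isLt; omega⟩)
          (σ ⟨2 * (i : ℕ) + 1, by have := i.isLt; omega⟩)

/-- `Pf_I(A)`: the Pfaffian of the submatrix of `A` with rows and columns indexed by `I`
in increasing order. -/
def PfI {n : ℕ} (A : Matrix (Fin n) (Fin n) ℝ) (I : Finset (Fin n)) : ℝ :=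
  Pfaff (Matrix.of fun (p q : Fin I.card) =>
    A ((I.orderIsoOfFin rfl p : Fin n)) ((I.orderIsoOfFin rfl q : Fin n)))

/-- `sgn(I,[n]) = (-1)^{(Σ_{i∈I} i) - |I|(|I|+1)/2}` (the elements of `I` are 1-based, so a
0-based element `i` contributes `i+1`; the natural subtraction agrees with the integer one
since the sum of `|I|` distinct positive integers is at least `|I|(|I|+1)/2`). -/
def sgnSet {n : ℕ} (I : Finset (Fin n)) : ℝ :=
  (-1 : ℝ) ^ ((∑ i ∈ I, ((i : ℕ) + 1)) - I.card * (I.card + 1) / 2)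

/-- The block matrix `[Id_n | A]`. -/
def IdA {n : ℕ} (A : Matrix (Fin n) (Fin n) ℝ) : Matrix (Fin n) (Fin (2 * n)) ℝ :=
  Matrix.of fun p q =>
    if h : (q : ℕ) < n then (if (p : ℕ) = (q : ℕ) then 1 else 0)
    else A p ⟨(q : ℕ) - n, by have := q.isLt; omega⟩

/-- The full word `(j_1, …, j_{2N})`: `1, 2,1, 3,2,1, …, n-1,…,1` followed by `(i_1,…,i_N)`. -/
def wordFull (n : ℕ) : List ℕ :=
  (((List.range n).map (fun r => decRun r 1)).flatten) ++ wordD n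

/-- `z(ε) = x_{j_1}(ε) ⋯ x_{j_{2N}}(ε)`. -/
def zeps (n : ℕ) (ε : ℝ) : Matrix (Fin (2 * n)) (Fin (2 * n)) ℝ :=
  ((wordFull n).map (fun i => xMat n i ε)).prod

/-- `Z(ε) = z(ε)ᵀ · z(ε)`. -/
def Zeps (n : ℕ) (ε : ℝ) : Matrix (Fin (2 * n)) (Fin (2 * n)) ℝ :=
  (zeps n ε)ᵀ * zeps n ε

/-- First block `Y₁(ε)` of `[Id_n | A] · Z(ε)`. -/
def Y1 {n : ℕ} (A : Matrix (Fin n) (Fin n) ℝ) (ε : ℝ) : Matrix (Fin n) (Fin n) ℝ :=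
  Matrix.of fun p q => (IdA A * Zeps n ε) p ⟨(q : ℕ), by have := q.isLt; omega⟩

/-- Second block `Y₂(ε)` of `[Id_n | A] · Z(ε)`. -/
def Y2 {n : ℕ} (A : Matrix (Fin n) (Fin n) ℝ) (ε : ℝ) : Matrix (Fin n) (Fin n) ℝ :=
  Matrix.of fun p q => (IdA A * Zeps n ε) p ⟨n + (q : ℕ), by have := q.isLt; omega⟩

/-- The simple generators `s_i` of the Weyl group `W` of `SO(2n)`, as permutations of
`{1,…,2n}` (0-based here): for `1 ≤ i ≤ n-1`, `s_i = (i,i+1)(n+i,n+i+1)`; for `i = n`,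
`s_n = (n,2n-1)(n-1,2n)`. -/
def sGen (n : ℕ) (i : ℕ) : Equiv.Perm (Fin (2 * n)) :=
  if h : 1 ≤ i ∧ i ≤ n - 1 ∧ 2 ≤ n then
    Equiv.swap ⟨i - 1, by omega⟩ ⟨i, by omega⟩ *
      Equiv.swap ⟨n + i - 1, by omega⟩ ⟨n + i, by omega⟩
  else if h2 : i = n ∧ 2 ≤ n then
    Equiv.swap ⟨n - 1, by omega⟩ ⟨2 * n - 2, by omega⟩ *
      Equiv.swap ⟨n - 2, by omega⟩ ⟨2 * n - 1, by omega⟩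
  else 1

/-- Membership in the Weyl group `W`: `σ(n+i) ≡ n + σ(i) (mod 2n)` for all `1 ≤ i ≤ n`,
and the number of `i ∈ {1,…,n}` with `σ(i) > n` is even. (All positions are 0-based; a
0-based value `v` corresponds to the 1-based value `v+1`.) -/
def inW (n : ℕ) (σ : Equiv.Perm (Fin (2 * n))) : Prop :=
  (∀ i : Fin n,
    ((σ ⟨n + (i : ℕ), by have := i.isLt; omega⟩ : Fin (2 * n)) : ℕ)
      ≡ n + ((σ ⟨(i : ℕ), by have := i.isLt; omega⟩ : Fin (2 * n)) : ℕ) [MOD 2 * n]) ∧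
  Even (Finset.univ.filter (fun i : Fin n =>
    n ≤ ((σ ⟨(i : ℕ), by have := i.isLt; omega⟩ : Fin (2 * n)) : ℕ))).card

/-- `I_w = {i ∈ {1,…,n} : w(i) > n}`, as a finset of `Fin n` (0-based). -/
def Iset (n : ℕ) (σ : Equiv.Perm (Fin (2 * n))) : Finset (Fin n) :=
  Finset.univ.filter (fun i : Fin n =>
    n ≤ ((σ ⟨(i : ℕ), by have := i.isLt; omega⟩ : Fin (2 * n)) : ℕ))

/-- The parabolic subgroup `W_{[n-1]}` generated by `s_1, …, s_{n-1}`. -/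
def Wpar (n : ℕ) : Subgroup (Equiv.Perm (Fin (2 * n))) :=
  Subgroup.closure { σ | ∃ i, 1 ≤ i ∧ i ≤ n - 1 ∧ σ = sGen n i }

/-- The standard basis vector `e_i` of `ℝ^{2n}` (with `i : Fin n` 0-based, sitting in
position `i` of the first block). -/
def evec (n : ℕ) (i : Fin n) : Fin (2 * n) → ℝ :=
  Pi.single ⟨(i : ℕ), by have := i.isLt; omega⟩ 1

/-- The standard basis vector `f_j` of `ℝ^{2n}` (position `n + j`). -/
def fvec (n : ℕ) (j : Fin n) : Fin (2 * n) → ℝ :=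
  Pi.single ⟨n + (j : ℕ), by have := j.isLt; omega⟩ 1

/-- `f = ι(f_1)⋯ι(f_n)` in the Clifford algebra. -/
def fElt {n : ℕ} (Q : QuadraticForm ℝ (Fin (2 * n) → ℝ)) : CliffordAlgebra Q :=
  (List.ofFn (fun j : Fin n => CliffordAlgebra.ι Q (fvec n j))).prod

/-- `e_S = ι(e_{l_1})⋯ι(e_{l_s})` where `l_1 < ⋯ < l_s` enumerates `S`. -/
def eProd {n : ℕ} (Q : QuadraticForm ℝ (Fin (2 * n) → ℝ)) (S : Finset (Fin n)) :
    CliffordAlgebra Q :=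
  ((S.sort (· ≤ ·)).map (fun l => CliffordAlgebra.ι Q (evec n l))).prod

/-- `h = Π_{i=1}^n ι(e_i + Σ_j A_{ij} f_j)` (product in increasing order of `i`). -/
def hElt {n : ℕ} (Q : QuadraticForm ℝ (Fin (2 * n) → ℝ)) (A : Matrix (Fin n) (Fin n) ℝ) :
    CliffordAlgebra Q :=
  (List.ofFn (fun i : Fin n =>
    CliffordAlgebra.ι Q (evec n i + ∑ j : Fin n, A i j • fvec n j))).prod

/-- The sorted list of the (1-based) elements of `S ⊆ {1,…,n}`. -/
def valsOf {n : ℕ} (S : Finset (Fin n)) : List ℕ :=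
  (S.sort (· ≤ ·)).map (fun i => (i : ℕ) + 1)

/-- The word `w_1 w_2 ⋯ w_r` where
`w_m = s_n (s_{n-2}⋯s_{i_{2m-1}}) (s_{n-1}⋯s_{i_{2m}})` and `vals` lists `i_1 < i_2 < ⋯`
(1-based); `m` is 0-based here. -/
def uWord (n r : ℕ) (vals : List ℕ) : List ℕ :=
  ((List.range r).map (fun m =>
    n :: (decRun (n - 2) (vals.getD (2 * m) 0) ++ decRun (n - 1) (vals.getD (2 * m + 1) 0)))).flatten

/-- The permutation `u = w_1 w_2 ⋯ w_r`. -/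
def uPerm (n r : ℕ) (vals : List ℕ) : Equiv.Perm (Fin (2 * n)) :=
  ((uWord n r vals).map (sGen n)).prod

/-- `L = r + Σ_{m=1}^{r} ((n-1-i_{2m-1}) + (n-i_{2m}))`. -/
def Lval (n r : ℕ) (vals : List ℕ) : ℕ :=
  r + ∑ m ∈ Finset.range r, ((n - 1 - vals.getD (2 * m) 0) + (n - vals.getD (2 * m + 1) 0))

/-!
Right multiplication by `x_i(t)` acts on `A` through the row space of `[1 | A]`. For `i < n` it is a
congruence by a transvection, for `i = n` it adds `t` and `-t` to the two entries of `A` indexed by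
`n - 1` and `n`. In both cases the signed Pfaffian `sgn(I) Pf_I(A)` either stays the same or grows
by `t` times the signed Pfaffian of one other set `J`: for `i < n`, `J` is `I` with `i` replaced by
`i + 1`, and for `i = n`, `J` is `I` without `n - 1` and `n`. Hence, starting at `A = 0`, all signed
Pfaffians stay nonnegative, and that of `I` is positive as soon as `I` is reached from `∅` by moves
`J ↦ I` read off a subword of `(i_1, …, i_N)`. Such a subword exists for every `I` of even size: the
`m`-th block creates the pair `{n - 1, n}` and slides it down to the `m`-th pair of elements of `I`.
-/

section PfaffianSum

open Equiv.Perm Function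

lemma exists_pair_of_equiv {ι κ : Type*} (φ : κ ⊕ κ ≃ ι) (p : ι) :
    ∃ j, (φ (.inl j) = p ∨ φ (.inr j) = p) ∧ ∀ i ≠ j, φ (.inl i) ≠ p ∧ φ (.inr i) ≠ p := by
  obtain ⟨j | j, rfl⟩ := φ.surjective p
  · exact ⟨j, .inl rfl, fun i hi => by simpa using hi⟩
  · exact ⟨j, .inr rfl, fun i hi => by simpa using hi⟩

variable {ι κ R : Type*} [Fintype ι] [DecidableEq ι] [Fintype κ] [CommRing R]

/-- The polarization of the unnormalized Pfaffian: the `i`-th factor of each term is taken from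
the matrix `B i`. The positions `e (inl i)` and `e (inr i)` form the `i`-th pair. -/
def mixedPfaffianSum (e : κ ⊕ κ ≃ ι) (B : κ → Matrix ι ι R) : R :=
  ∑ σ : Equiv.Perm ι, ((sign σ : ℤ) : R) * ∏ i, B i (σ (e (.inl i))) (σ (e (.inr i)))

/-- The Pfaffian without its normalizing factor `1 / (2^k k!)`, where `k` is the number of pairs.
It makes sense over every commutative ring. -/
def pfaffianSum (e : κ ⊕ κ ≃ ι) (B : Matrix ι ι R) : R :=
  mixedPfaffianSum e fun _ => B

lemma pfaffianSum_eq_add_mul_of_row_col (e : κ ⊕ κ ≃ ι) {B B₁ B₂ : Matrix ι ι R} {c : R} (p : ι)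
    (off₁ : ∀ x y, x ≠ p → y ≠ p → B x y = B₁ x y)
    (off₂ : ∀ x y, x ≠ p → y ≠ p → B x y = B₂ x y)
    (row : ∀ y ≠ p, B p y = B₁ p y + c * B₂ p y)
    (col : ∀ x ≠ p, B x p = B₁ x p + c * B₂ x p) :
    pfaffianSum e B = pfaffianSum e B₁ + c * pfaffianSum e B₂ := by
  classical
  simp only [pfaffianSum, mixedPfaffianSum]
  rw [Finset.mul_sum, ← Finset.sum_add_distrib]
  refine Finset.sum_congr rfl fun σ _ => ?_
  obtain ⟨j, hjp, hj⟩ := exists_pair_of_equiv (e.trans σ) p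
  simp only [Equiv.trans_apply] at hjp hj
  have inl_ne_inr : σ (e (.inl j)) ≠ σ (e (.inr j)) := by simp
  have factor_j : B (σ (e (.inl j))) (σ (e (.inr j))) =
      B₁ (σ (e (.inl j))) (σ (e (.inr j))) + c * B₂ (σ (e (.inl j))) (σ (e (.inr j))) := by
    obtain hp | hp := hjp <;> rw [hp] at inl_ne_inr ⊢
    · exact row _ inl_ne_inr.symm
    · exact col _ inl_ne_inr
  have away₁ : ∏ i ∈ {j}ᶜ, B (σ (e (.inl i))) (σ (e (.inr i))) =
      ∏ i ∈ {j}ᶜ, B₁ (σ (e (.inl i))) (σ (e (.inr i))) :=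
    Finset.prod_congr rfl fun i hi =>
      off₁ _ _ (hj i (by simpa using hi)).1 (hj i (by simpa using hi)).2
  have away₂ : ∏ i ∈ {j}ᶜ, B (σ (e (.inl i))) (σ (e (.inr i))) =
      ∏ i ∈ {j}ᶜ, B₂ (σ (e (.inl i))) (σ (e (.inr i))) :=
    Finset.prod_congr rfl fun i hi =>
      off₂ _ _ (hj i (by simpa using hi)).1 (hj i (by simpa using hi)).2
  simp only [Fintype.prod_eq_mul_prod_compl j]
  rw [← away₁, ← away₂, factor_j]
  ring

lemma pfaffianSum_submatrix_eq_zero {ν : Type*} (e : κ ⊕ κ ≃ ι) (A : Matrix ν ν R) (g : ι → ν)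
    {p q : ι} (hpq : p ≠ q) (hg : g p = g q) : pfaffianSum e (A.submatrix g g) = 0 := by
  have g_swap (x : ι) : g (Equiv.swap p q x) = g x := by
    rw [Equiv.swap_apply_def]; split_ifs <;> simp_all
  refine Finset.sum_involution (fun σ _ => Equiv.swap p q * σ) (fun σ _ => ?_)
    (fun σ _ _ h => hpq (by simpa using h)) (fun _ _ => Finset.mem_univ _) (fun σ _ => by simp)
  simp [sign_swap hpq, g_swap]

lemma pfaffianSum_submatrix_transvection {ν : Type*} [Fintype ν] [DecidableEq ν] (e : κ ⊕ κ ≃ ι)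
    (A : Matrix ν ν R) (g : ι → ν) (p : ι) (hp : ∀ x ≠ p, g x ≠ g p) (b : ν) (c : R) :
    pfaffianSum e ((transvection (g p) b c * A * transvection b (g p) c).submatrix g g) =
      pfaffianSum e (A.submatrix g g) +
        c * pfaffianSum e (A.submatrix (update g p b) (update g p b)) := by
  refine pfaffianSum_eq_add_mul_of_row_col e p (fun x y hx hy => ?_) (fun x y hx hy => ?_)
    (fun y hy => ?_) (fun x hx => ?_)
  · simp [hp x hx, hp y hy]
  · simp [hp x hx, hp y hy, hx, hy]
  · simp [hp y hy, hy]
  · simp [hp x hx, hx]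

lemma mixedPfaffianSum_comp_perm (e : κ ⊕ κ ≃ ι) (B : κ → Matrix ι ι R) (π : Equiv.Perm κ) :
    mixedPfaffianSum e (B ∘ π) = mixedPfaffianSum e B := by
  classical
  let τ : Equiv.Perm ι := e.permCongr (Equiv.Perm.sumCongr π π)
  have sign_τ : sign τ = 1 := by
    rw [sign_permCongr, sign_sumCongr, Int.units_mul_self]
  unfold mixedPfaffianSum
  rw [← Equiv.sum_comp (Equiv.mulRight τ)]
  refine Finset.sum_congr rfl fun σ _ => ?_
  simp only [Equiv.coe_mulRight]
  rw [Equiv.Perm.sign_mul, sign_τ, mul_one,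
    ← Equiv.prod_comp π fun i => B i (σ (e (.inl i))) (σ (e (.inr i)))]
  simp [τ, Equiv.permCongr_apply]

variable [DecidableEq κ]

lemma mixedPfaffianSum_update_sub (e : κ ⊕ κ ≃ ι) (B : κ → Matrix ι ι R) (j : κ)
    (C D : Matrix ι ι R) :
    mixedPfaffianSum e (update B j (C - D)) =
      mixedPfaffianSum e (update B j C) - mixedPfaffianSum e (update B j D) := by
  simp only [mixedPfaffianSum, ← Finset.sum_sub_distrib, ← mul_sub]
  refine Finset.sum_congr rfl fun σ _ => congrArg _ ?_
  simp only [Fintype.prod_eq_mul_prod_compl j, update_self, Matrix.sub_apply, sub_mul]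
  congr 2 <;> refine Finset.prod_congr rfl fun i hi => ?_ <;>
    rw [update_of_ne (by simpa using hi), update_of_ne (by simpa using hi)]

lemma mixedPfaffianSum_update_transpose (e : κ ⊕ κ ≃ ι) (B : κ → Matrix ι ι R) (j : κ)
    (C : Matrix ι ι R) :
    mixedPfaffianSum e (update B j Cᵀ) = -mixedPfaffianSum e (update B j C) := by
  let τ : Equiv.Perm ι := Equiv.swap (e (.inl j)) (e (.inr j))
  have sign_τ : sign τ = -1 := sign_swap (by simp)
  have τ_of_ne (i : κ) (hi : i ≠ j) : τ (e (.inl i)) = e (.inl i) ∧ τ (e (.inr i)) = e (.inr i) :=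
    ⟨Equiv.swap_apply_of_ne_of_ne (by simpa) (by simp),
      Equiv.swap_apply_of_ne_of_ne (by simp) (by simpa)⟩
  unfold mixedPfaffianSum
  rw [← Equiv.sum_comp (Equiv.mulRight τ), ← Finset.sum_neg_distrib]
  refine Finset.sum_congr rfl fun σ _ => ?_
  simp only [Equiv.coe_mulRight, Equiv.Perm.sign_mul, sign_τ]
  have factor (i : κ) : update B j Cᵀ i ((σ * τ) (e (.inl i))) ((σ * τ) (e (.inr i))) =
      update B j C i (σ (e (.inl i))) (σ (e (.inr i))) := by
    obtain rfl | hi := eq_or_ne i j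
    · simp [τ]
    · simp [update_of_ne hi, τ_of_ne i hi]
  simp only [factor]
  simp

lemma mixedPfaffianSum_update_sub_transpose (e : κ ⊕ κ ≃ ι) (B : κ → Matrix ι ι R) (j : κ)
    (C : Matrix ι ι R) :
    mixedPfaffianSum e (update B j (C - Cᵀ)) = 2 * mixedPfaffianSum e (update B j C) := by
  rw [mixedPfaffianSum_update_sub, mixedPfaffianSum_update_transpose, sub_neg_eq_add, two_mul]

lemma mixedPfaffianSum_update_const_eq (e : κ ⊕ κ ≃ ι) (B C : Matrix ι ι R) (j l : κ) :
    mixedPfaffianSum e (update (fun _ => B) j C) =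
      mixedPfaffianSum e (update (fun _ => B) l C) := by
  rw [← mixedPfaffianSum_comp_perm e (update (fun _ => B) l C) (Equiv.swap j l),
    Function.update_comp_equiv]
  simp [Function.comp_def]

lemma prod_add_eq_add_sum_prod_update (b c : κ → R) (j : κ) (hc : ∀ i ≠ j, c i = 0) :
    ∏ i, (b i + c i) = ∏ i, b i + ∑ l, ∏ i, update b l (c l) i := by
  have other_terms (l : κ) (hl : l ≠ j) : ∏ i, update b l (c l) i = 0 :=
    Finset.prod_eq_zero (Finset.mem_univ l) (by rw [update_self, hc l hl])
  have away_from_j : ∏ i ∈ {j}ᶜ, (b i + c i) = ∏ i ∈ {j}ᶜ, b i :=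
    Finset.prod_congr rfl fun i hi => by rw [hc i (by simpa using hi), add_zero]
  rw [Fintype.sum_eq_single j other_terms, Finset.prod_update_of_mem (Finset.mem_univ j),
    ← Finset.compl_eq_univ_sdiff, Fintype.prod_eq_mul_prod_compl j,
    Fintype.prod_eq_mul_prod_compl j b, away_from_j, add_mul]

lemma pfaffianSum_add_eq_add_card_mul (e : κ ⊕ κ ≃ ι) (B C : Matrix ι ι R) (p : ι)
    (hC : ∀ x y, x ≠ p → y ≠ p → C x y = 0) (j : κ) :
    pfaffianSum e (B + C) = pfaffianSum e B +
      Fintype.card κ * mixedPfaffianSum e (update (fun _ => B) j C) := by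
  have sum_pairs : pfaffianSum e (B + C) = pfaffianSum e B +
      ∑ l, mixedPfaffianSum e (update (fun _ => B) l C) := by
    simp only [pfaffianSum, mixedPfaffianSum]
    rw [Finset.sum_comm, ← Finset.sum_add_distrib]
    refine Finset.sum_congr rfl fun σ _ => ?_
    -- Exactly one pair meets `p`, so at most one factor can be taken from `C`.
    obtain ⟨j, -, hj⟩ := exists_pair_of_equiv (e.trans σ) p
    rw [← Finset.mul_sum, ← mul_add]
    refine congrArg _ ((prod_add_eq_add_sum_prod_update
      (fun i => B (σ (e (.inl i))) (σ (e (.inr i))))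
      (fun i => C (σ (e (.inl i))) (σ (e (.inr i)))) j
      fun i hi => hC _ _ (hj i hi).1 (hj i hi).2).trans ?_)
    congr! 3 with l - i
    obtain rfl | hi := eq_or_ne i l
    · simp
    · simp [update_of_ne hi]
  rw [sum_pairs, Fintype.sum_congr _ _ fun l => mixedPfaffianSum_update_const_eq e B C l j]
  simp

end PfaffianSum

section Pfaff

open Equiv.Perm Function

lemma sum_perm_eq_sum_extendDomain {ι α M : Type*} [Fintype ι] [DecidableEq ι] [Fintype α]
    [DecidableEq α] [AddCommMonoid M] {P : ι → Prop} [DecidablePred P] (f : α ≃ Subtype P)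
    (F : Equiv.Perm ι → M) (hF : ∀ σ, (∃ x, ¬P x ∧ σ x ≠ x) → F σ = 0) :
    ∑ σ, F σ = ∑ τ : Equiv.Perm α, F (τ.extendDomain f) := by
  refine (Finset.sum_of_injOn (fun τ : Equiv.Perm α => τ.extendDomain f)
    (extendDomainHom_injective f).injOn (by simp) (fun σ _ hσ => hF σ ?_) fun _ _ => rfl).symm
  by_contra! fixes
  have preserves (x : ι) : P (σ x) ↔ P x := by
    by_contra h
    by_cases hx : P x
    · have := fixes (σ x) (by tauto)
      rw [σ.injective this] at h
      tauto
    · rw [fixes x hx] at h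
      tauto
  refine hσ ⟨f.symm.permCongr (σ.subtypePerm preserves), Finset.mem_univ _, ?_⟩
  ext x
  by_cases hx : P x
  · simp [extendDomain_apply_subtype _ f hx]
  · simp [extendDomain_apply_not_subtype _ f hx, fixes x hx]

/-- The positions `0, …, 2k - 1` grouped into the consecutive pairs `{2i, 2i + 1}`, as in the
definition of the Pfaffian. -/
def pairEquiv (k : ℕ) : Fin k ⊕ Fin k ≃ Fin (2 * k) where
  toFun := Sum.elim (fun i => ⟨2 * i, by lia⟩) fun i => ⟨2 * i + 1, by lia⟩
  invFun x := if (x : ℕ) % 2 = 0 then .inl ⟨x / 2, by lia⟩ else .inr ⟨x / 2, by lia⟩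
  left_inv := by rintro (i | i) <;> simp [Fin.ext_iff]; lia
  right_inv x := by dsimp only; split_ifs <;> (simp [Fin.ext_iff]; lia)

lemma Pfaff_eq_pfaffianSum {k : ℕ} (B : Matrix (Fin (2 * k)) (Fin (2 * k)) ℝ) :
    Pfaff B = (1 / (2 ^ k * k.factorial)) * pfaffianSum (pairEquiv k) B := by
  have two_mul_div : 2 * k / 2 = k := by lia
  have prod_pairs (σ : Equiv.Perm (Fin (2 * k))) :
      ∏ i : Fin (2 * k / 2), B (σ ⟨2 * i, by lia⟩) (σ ⟨2 * i + 1, by lia⟩) =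
        ∏ i : Fin k, B (σ (pairEquiv k (.inl i))) (σ (pairEquiv k (.inr i))) :=
    Fintype.prod_equiv (finCongr two_mul_div) _ _ fun i => rfl
  simp only [Pfaff, prod_pairs, two_mul_div, pfaffianSum, mixedPfaffianSum]

lemma mixedPfaffianSum_update_last_single {k : ℕ} {R : Type*} [CommRing R]
    (B : Matrix (Fin (2 * (k + 1))) (Fin (2 * (k + 1))) R) (t : R) :
    mixedPfaffianSum (pairEquiv (k + 1)) (update (fun _ => B) (Fin.last k)
        (single (pairEquiv (k + 1) (.inl (Fin.last k)))
          (pairEquiv (k + 1) (.inr (Fin.last k))) t)) =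
      t * pfaffianSum (pairEquiv k)
        (B.submatrix (Fin.castLE (by lia)) (Fin.castLE (by lia))) := by
  have le : 2 * k ≤ 2 * (k + 1) := by lia
  let f := (Fin.castLEOrderIso le).toEquiv
  have fixed (τ : Equiv.Perm (Fin (2 * k))) (x : Fin (2 * (k + 1))) (hx : ¬(x : ℕ) < 2 * k) :
      τ.extendDomain f x = x := extendDomain_apply_not_subtype τ f hx
  have moved (τ : Equiv.Perm (Fin (2 * k))) (x : Fin (2 * k)) :
      τ.extendDomain f (Fin.castLE le x) = Fin.castLE le (τ x) := extendDomain_apply_image τ f x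
  have inl_castSucc (i : Fin k) :
      pairEquiv (k + 1) (.inl i.castSucc) = Fin.castLE le (pairEquiv k (.inl i)) := rfl
  have inr_castSucc (i : Fin k) :
      pairEquiv (k + 1) (.inr i.castSucc) = Fin.castLE le (pairEquiv k (.inr i)) := rfl
  -- Only the permutations fixing the last pair contribute.
  unfold mixedPfaffianSum
  rw [sum_perm_eq_sum_extendDomain f]
  · unfold pfaffianSum mixedPfaffianSum
    rw [Finset.mul_sum]
    refine Finset.sum_congr rfl fun τ _ => ?_
    rw [sign_extendDomain, Fin.prod_univ_castSucc, update_self, fixed _ _ (by simp [pairEquiv]),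
      fixed _ _ (by simp [pairEquiv])]
    simp only [inl_castSucc, inr_castSucc, moved, single_apply_same,
      update_of_ne (Fin.castSucc_ne_last _), submatrix_apply]
    ring
  · rintro σ ⟨x, hx, hσx⟩
    refine mul_eq_zero_of_right _ (Finset.prod_eq_zero (Finset.mem_univ (Fin.last k)) ?_)
    rw [update_self]
    refine single_apply_of_ne _ _ _ _ _ fun h => hσx ?_
    obtain rfl | rfl : x = pairEquiv (k + 1) (.inl (Fin.last k)) ∨
        x = pairEquiv (k + 1) (.inr (Fin.last k)) := by
      simp [pairEquiv, Fin.ext_iff]; lia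
    · exact h.1.symm
    · exact h.2.symm

lemma Pfaff_add_single_sub_single {k : ℕ} (B : Matrix (Fin (2 * (k + 1))) (Fin (2 * (k + 1))) ℝ)
    {u v : Fin (2 * (k + 1))} (hu : (u : ℕ) = 2 * k) (hv : (v : ℕ) = 2 * k + 1) (t : ℝ) :
    Pfaff (B + (single u v t - single v u t)) =
      Pfaff B + t * Pfaff (m := 2 * k)
        (B.submatrix (Fin.castLE (by lia)) (Fin.castLE (by lia))) := by
  obtain rfl : u = pairEquiv (k + 1) (.inl (Fin.last k)) := Fin.ext hu
  obtain rfl : v = pairEquiv (k + 1) (.inr (Fin.last k)) := Fin.ext hv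
  rw [Pfaff_eq_pfaffianSum, Pfaff_eq_pfaffianSum, Pfaff_eq_pfaffianSum,
    pfaffianSum_add_eq_add_card_mul _ _ _ (pairEquiv (k + 1) (.inl (Fin.last k))) _ (Fin.last k),
    ← transpose_single (pairEquiv (k + 1) (.inl (Fin.last k))),
    mixedPfaffianSum_update_sub_transpose, mixedPfaffianSum_update_last_single,
    Fintype.card_fin, Nat.factorial_succ]
  · push_cast
    field_simp
    ring
  · intro x y hx hy
    simp [hx.symm, hy.symm]

end Pfaff

section PfI

open Function

variable {n : ℕ}

lemma PfI_eq_Pfaff_submatrix {m : ℕ} (A : Matrix (Fin n) (Fin n) ℝ) {I : Finset (Fin n)}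
    {f : Fin m → Fin n} (hf : StrictMono f) (hfI : ∀ x, f x ∈ I) (hI : I.card = m) :
    PfI A I = Pfaff (A.submatrix f f) := by
  subst hI
  rw [Finset.orderEmbOfFin_unique rfl hfI hf]
  rfl

lemma PfI_congr {A B : Matrix (Fin n) (Fin n) ℝ} {I : Finset (Fin n)}
    (h : ∀ x ∈ I, ∀ y ∈ I, A x y = B x y) : PfI A I = PfI B I := by
  unfold PfI
  congr! 2
  ext p q
  exact h _ (Subtype.prop _) _ (Subtype.prop _)

lemma exists_strictMono_enumeration {I : Finset (Fin n)} {m : ℕ} (hI : I.card = m) :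
    ∃ f : Fin m → Fin n, StrictMono f ∧ (∀ x, f x ∈ I) ∧ ∀ a ∈ I, ∃ x, f x = a :=
  ⟨I.orderEmbOfFin hI, (I.orderEmbOfFin hI).strictMono, I.orderEmbOfFin_mem hI,
    fun a ha => by simpa [← Set.mem_range] using ha⟩

variable {a b : Fin n} {I K : Finset (Fin n)}

lemma PfI_transvection_insert (A : Matrix (Fin n) (Fin n) ℝ) (hab : (a : ℕ) + 1 = b)
    (ha : a ∉ K) (hb : b ∉ K) (even : Even (insert a K).card) (c : ℝ) :
    PfI (transvection a b c * A * transvection b a c) (insert a K) =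
      PfI A (insert a K) + c * PfI A (insert b K) := by
  obtain ⟨k, card_a⟩ := even.two_dvd
  have card_b : (insert b K).card = 2 * k := by
    rwa [Finset.card_insert_of_notMem hb, ← Finset.card_insert_of_notMem ha]
  obtain ⟨f, hf, f_mem, f_surj⟩ := exists_strictMono_enumeration card_a
  obtain ⟨p, rfl⟩ := f_surj a (Finset.mem_insert_self a K)
  have f_mem_K (x) (hx : x ≠ p) : f x ∈ K :=
    Finset.mem_of_mem_insert_of_ne (f_mem x) (hf.injective.ne hx)
  have hg : StrictMono (update f p b) := by
    intro x y hxy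
    have hfxy := hf hxy
    obtain rfl | hx := eq_or_ne x p
    · have : f y ≠ b := ne_of_mem_of_not_mem (f_mem_K y hxy.ne') hb
      simp only [update_self, update_of_ne hxy.ne']
      lia
    · obtain rfl | hy := eq_or_ne y p
      · simp only [update_self, update_of_ne hxy.ne]
        lia
      · simpa only [update_of_ne hx, update_of_ne hy]
  have hgb (x) : update f p b x ∈ insert b K := by
    obtain rfl | hx := eq_or_ne x p
    · simp
    · simp [hx, f_mem_K x hx]
  rw [PfI_eq_Pfaff_submatrix _ hf f_mem card_a,
    PfI_eq_Pfaff_submatrix _ hf f_mem card_a,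
    PfI_eq_Pfaff_submatrix _ hg hgb card_b, Pfaff_eq_pfaffianSum, Pfaff_eq_pfaffianSum,
    Pfaff_eq_pfaffianSum, pfaffianSum_submatrix_transvection _ _ _ _ fun x hx => hf.injective.ne hx]
  ring

lemma PfI_transvection_of_notMem (A : Matrix (Fin n) (Fin n) ℝ) (ha : a ∉ I) (c : ℝ) :
    PfI (transvection a b c * A * transvection b a c) I = PfI A I := by
  refine PfI_congr fun x hx y hy => ?_
  simp [ne_of_mem_of_not_mem hx ha, ne_of_mem_of_not_mem hy ha]

lemma PfI_transvection_of_mem_of_mem (A : Matrix (Fin n) (Fin n) ℝ) (hab : a ≠ b)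
    (ha : a ∈ I) (hb : b ∈ I) (even : Even I.card) (c : ℝ) :
    PfI (transvection a b c * A * transvection b a c) I = PfI A I := by
  obtain ⟨k, hI⟩ := even.two_dvd
  obtain ⟨f, hf, f_mem, f_surj⟩ := exists_strictMono_enumeration hI
  obtain ⟨p, rfl⟩ := f_surj a ha
  obtain ⟨q, rfl⟩ := f_surj b hb
  have hpq : p ≠ q := fun h => hab (h ▸ rfl)
  have repeated : update f p (f q) p = update f p (f q) q := by simp [hpq.symm]
  rw [PfI_eq_Pfaff_submatrix _ hf f_mem hI,
    PfI_eq_Pfaff_submatrix _ hf f_mem hI, Pfaff_eq_pfaffianSum,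
    Pfaff_eq_pfaffianSum, pfaffianSum_submatrix_transvection _ _ _ _ fun x hx => hf.injective.ne hx,
    pfaffianSum_submatrix_eq_zero _ _ _ hpq repeated, mul_zero, add_zero]

lemma PfI_add_single_sub_single_insert (A : Matrix (Fin n) (Fin n) ℝ) (hab : (a : ℕ) + 1 = b)
    (hbn : (b : ℕ) + 1 = n) (ha : a ∉ K) (hb : b ∉ K) (even : Even K.card) (t : ℝ) :
    PfI (A + (single a b t - single b a t)) (insert a (insert b K)) =
      PfI A (insert a (insert b K)) + t * PfI A K := by
  obtain ⟨k, hK⟩ := even.two_dvd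
  have a_ne_b : a ≠ b := by lia
  have hI : (insert a (insert b K)).card = 2 * (k + 1) := by
    rw [Finset.card_insert_of_notMem (by simp [a_ne_b, ha]), Finset.card_insert_of_notMem hb]
    lia
  obtain ⟨f, hf, f_mem, f_surj⟩ := exists_strictMono_enumeration hI
  obtain ⟨u, rfl⟩ := f_surj a (by simp)
  obtain ⟨v, rfl⟩ := f_surj b (by simp)
  have hv : (v : ℕ) = 2 * k + 1 := by
    by_contra h
    have : f v < f ⟨2 * k + 1, by lia⟩ := hf (Fin.lt_def.2 (by lia))
    lia
  have hu : (u : ℕ) = 2 * k := by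
    have u_lt_v : u < v := hf.lt_iff_lt.1 (by lia)
    by_contra h
    have u_lt : f u < f ⟨2 * k, by lia⟩ := hf (Fin.lt_def.2 (by lia))
    have lt_v : f ⟨2 * k, by lia⟩ < f v := hf (Fin.lt_def.2 (by lia))
    lia
  have le : 2 * k ≤ 2 * (k + 1) := by lia
  have f_castLE_mem (x : Fin (2 * k)) : f (Fin.castLE le x) ∈ K := by
    have : f (Fin.castLE le x) ∈ insert (f u) (insert (f v) K) := f_mem _
    refine Finset.mem_of_mem_insert_of_ne (Finset.mem_of_mem_insert_of_ne this ?_) ?_ <;>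
      refine hf.injective.ne (Fin.ne_of_val_ne ?_) <;> simp <;> lia
  have submatrix_add : (A + (single (f u) (f v) t - single (f v) (f u) t)).submatrix f f =
      A.submatrix f f + (single u v t - single v u t) := by
    ext x y
    simp [single_apply, hf.injective.eq_iff]
  rw [PfI_eq_Pfaff_submatrix _ hf f_mem hI,
    PfI_eq_Pfaff_submatrix _ hf f_mem hI, submatrix_add,
    Pfaff_add_single_sub_single _ hu hv, submatrix_submatrix,
    ← PfI_eq_Pfaff_submatrix A (hf.comp (Fin.strictMono_castLE le)) f_castLE_mem hK]

lemma PfI_add_single_sub_single_of_notMem (A : Matrix (Fin n) (Fin n) ℝ)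
    (hI : a ∉ I ∨ b ∉ I) (t : ℝ) : PfI (A + (single a b t - single b a t)) I = PfI A I := by
  refine PfI_congr fun x hx y hy => ?_
  have hxy : ¬(a = x ∧ b = y) := by rintro ⟨rfl, rfl⟩; tauto
  have hyx : ¬(b = x ∧ a = y) := by rintro ⟨rfl, rfl⟩; tauto
  simp [hxy, hyx]

end PfI

section SignedPfaffian

variable {n : ℕ} {a b : Fin n} {I J K : Finset (Fin n)}

lemma card_le_of_forall_lt (h : ∀ x ∈ I, x < a) : I.card ≤ a := by
  simpa using Finset.card_le_card fun x hx => Finset.mem_Iio.2 (h x hx)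

lemma card_mul_succ_div_two_le_sum (I : Finset (Fin n)) :
    I.card * (I.card + 1) / 2 ≤ ∑ i ∈ I, ((i : ℕ) + 1) := by
  suffices I.card * (I.card + 1) ≤ 2 * ∑ i ∈ I, ((i : ℕ) + 1) by lia
  induction I using Finset.induction_on_max with
  | empty => simp
  | insert a s hs ih =>
    have ha : a ∉ s := fun h => lt_irrefl _ (hs a h)
    rw [Finset.sum_insert ha, Finset.card_insert_of_notMem ha]
    nlinarith [card_le_of_forall_lt hs]

lemma sgnSet_eq_neg_one_pow_add (I : Finset (Fin n)) :
    sgnSet I = (-1) ^ (∑ i ∈ I, ((i : ℕ) + 1) + I.card * (I.card + 1) / 2) := by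
  refine neg_one_pow_congr ?_
  rw [Nat.even_sub (card_mul_succ_div_two_le_sum I), Nat.even_add]

lemma sgnSet_insert_succ (hab : (a : ℕ) + 1 = b) (ha : a ∉ K) (hb : b ∉ K) :
    sgnSet (insert b K) = -sgnSet (insert a K) := by
  rw [sgnSet_eq_neg_one_pow_add, sgnSet_eq_neg_one_pow_add, Finset.sum_insert ha,
    Finset.sum_insert hb, Finset.card_insert_of_notMem ha, Finset.card_insert_of_notMem hb, ← hab]
  ring

lemma sgnSet_insert_insert_succ (hab : (a : ℕ) + 1 = b) (ha : a ∉ K) (hb : b ∉ K)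
    (even : Even K.card) : sgnSet (insert a (insert b K)) = sgnSet K := by
  obtain ⟨k, hk⟩ := even.two_dvd
  have ha' : a ∉ insert b K := by simp [ha, Fin.ext_iff]; lia
  have half (m : ℕ) : 2 * m * (2 * m + 1) / 2 = m * (2 * m + 1) := by
    rw [mul_assoc, Nat.mul_div_cancel_left _ two_pos]
  rw [sgnSet_eq_neg_one_pow_add, sgnSet_eq_neg_one_pow_add, Finset.sum_insert ha',
    Finset.sum_insert hb, Finset.card_insert_of_notMem ha', Finset.card_insert_of_notMem hb, hk,
    show 2 * k + 1 + 1 = 2 * (k + 1) by ring, half, half, ← hab]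
  refine neg_one_pow_congr ?_
  rw [show ∀ s, (a : ℕ) + 1 + (a + 1 + 1 + s) + (k + 1) * (2 * (k + 1) + 1) =
    2 * (a + 2 * k + 3) + (s + k * (2 * k + 1)) by intro s; ring, Nat.even_add]
  simp

/-- The Pfaffian `Pf_I(A)` normalized by the sign it is expected to have. -/
def signedPf (A : Matrix (Fin n) (Fin n) ℝ) (I : Finset (Fin n)) : ℝ :=
  sgnSet I * PfI A I

lemma signedPf_empty (A : Matrix (Fin n) (Fin n) ℝ) : signedPf A ∅ = 1 := by
  have PfI_empty : PfI A ∅ = 1 := by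
    rw [PfI_eq_Pfaff_submatrix (m := 2 * 0) A (f := Fin.elim0) (fun x => x.elim0)
      (fun x => x.elim0) rfl, Pfaff_eq_pfaffianSum]
    simp [pfaffianSum, mixedPfaffianSum]
  rw [signedPf, PfI_empty, mul_one]
  simp [sgnSet]

lemma signedPf_zero (hI : I.Nonempty) (even : Even I.card) : signedPf 0 I = 0 := by
  have half_ne_zero : I.card / 2 ≠ 0 := by
    have := hI.card_pos
    grind
  simp [signedPf, PfI, Pfaff, half_ne_zero]

lemma signedPf_transvection_insert (A : Matrix (Fin n) (Fin n) ℝ) (hab : (a : ℕ) + 1 = b)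
    (ha : a ∉ K) (hb : b ∉ K) (even : Even (insert b K).card) (t : ℝ) :
    signedPf (transvection a b (-t) * A * transvection b a (-t)) (insert a K) =
      signedPf A (insert a K) + t * signedPf A (insert b K) := by
  rw [Finset.card_insert_of_notMem hb, ← Finset.card_insert_of_notMem ha] at even
  rw [signedPf, signedPf, signedPf, PfI_transvection_insert A hab ha hb even,
    sgnSet_insert_succ hab ha hb]
  ring

lemma signedPf_add_single_sub_single_insert (A : Matrix (Fin n) (Fin n) ℝ)
    (hab : (a : ℕ) + 1 = b) (hbn : (b : ℕ) + 1 = n) (ha : a ∉ K) (hb : b ∉ K)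
    (even : Even K.card) (t : ℝ) :
    signedPf (A + (single a b t - single b a t)) (insert a (insert b K)) =
      signedPf A (insert a (insert b K)) + t * signedPf A K := by
  rw [signedPf, signedPf, signedPf, PfI_add_single_sub_single_insert A hab hbn ha hb even,
    ← sgnSet_insert_insert_succ hab ha hb even]
  ring

end SignedPfaffian

section Moves

variable {n : ℕ} {a b : Fin n} {I J K : Finset (Fin n)}

/-- `PfaffianMove i J I` says that the generator `x_i(t)` adds `t` times the signed Pfaffian of `J`
to that of `I`: for `i < n` an element moves one place down, and for `i = n` the two
largest indices are added. A value `a : Fin n` is the index `a + 1` of the paper. -/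
inductive PfaffianMove : ℕ → Finset (Fin n) → Finset (Fin n) → Prop
  | slide {a b : Fin n} {K : Finset (Fin n)} (hab : (a : ℕ) + 1 = b) (ha : a ∉ K) (hb : b ∉ K) :
      PfaffianMove b (insert b K) (insert a K)
  | create {a b : Fin n} {K : Finset (Fin n)} (hab : (a : ℕ) + 1 = b) (hbn : (b : ℕ) + 1 = n)
      (ha : a ∉ K) (hb : b ∉ K) : PfaffianMove n K (insert a (insert b K))

lemma PfaffianMove.even_card_iff {i : ℕ} (h : PfaffianMove i J I) :
    Even J.card ↔ Even I.card := by
  induction h with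
  | slide _ ha hb => rw [Finset.card_insert_of_notMem hb, Finset.card_insert_of_notMem ha]
  | @create a b K hab _ ha hb =>
    have ha' : a ∉ insert b K := by simp [ha, Fin.ext_iff]; lia
    rw [Finset.card_insert_of_notMem ha', Finset.card_insert_of_notMem hb]
    simp [Nat.even_add_one]

/-- `Reaches w J I` says that `I` is obtained from `J` by performing, in order, moves whose labels
form a subword of `w`. -/
inductive Reaches : List ℕ → Finset (Fin n) → Finset (Fin n) → Prop
  | nil (I : Finset (Fin n)) : Reaches [] I I
  | skip {w : List ℕ} {J I : Finset (Fin n)} (i : ℕ) (h : Reaches w J I) : Reaches (i :: w) J I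
  | move {w : List ℕ} {i : ℕ} {J K I : Finset (Fin n)} (hJK : PfaffianMove i J K)
      (hKI : Reaches w K I) : Reaches (i :: w) J I

lemma Reaches.refl (w : List ℕ) (I : Finset (Fin n)) : Reaches w I I := by
  induction w with
  | nil => exact .nil I
  | cons i w ih => exact .skip i ih

lemma Reaches.append {w w' : List ℕ} (hJK : Reaches w J K) (hKI : Reaches w' K I) :
    Reaches (w ++ w') J I := by
  induction hJK with
  | nil => exact hKI
  | skip i _ ih => exact .skip i (ih hKI)
  | move h _ ih => exact .move h (ih hKI)

lemma decRun_succ {c d : ℕ} (h : d ≤ c + 1) : decRun (c + 1) d = (c + 1) :: decRun c d := by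
  rw [decRun, decRun, show c + 1 + 1 - d = c + 1 - d + 1 by lia, List.range'_concat]
  simp [show d + (c + 1 - d) = c + 1 by lia]

lemma length_decRun (c d : ℕ) : (decRun c d).length = c + 1 - d := by
  simp [decRun]

lemma mem_decRun {c d i : ℕ} : i ∈ decRun c d ↔ d ≤ i ∧ i ≤ c := by
  simp [decRun]; lia

lemma reaches_decRun {c d : ℕ} (hc : c < n) (hda : d ≤ a + 1) (hac : (a : ℕ) ≤ c)
    (hK : ∀ x ∈ K, (x : ℕ) < a ∨ c < x) :
    Reaches (decRun c d) (insert ⟨c, hc⟩ K) (insert a K) := by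
  induction c with
  | zero =>
    obtain rfl : a = ⟨0, hc⟩ := Fin.ext (by simpa using hac)
    exact .refl _ _
  | succ c ih =>
    obtain h | h := eq_or_ne (a : ℕ) (c + 1)
    · obtain rfl : a = ⟨c + 1, hc⟩ := Fin.ext h
      exact .refl _ _
    · rw [decRun_succ (by lia)]
      have notMem (x : Fin n) (hx : (x : ℕ) = c ∨ (x : ℕ) = c + 1) : x ∉ K := fun hxK => by
        have := hK x hxK
        lia
      refine .move (.slide (a := ⟨c, by lia⟩) (b := ⟨c + 1, hc⟩) rfl
        (notMem _ (.inl rfl)) (notMem _ (.inr rfl))) ?_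
      refine ih (by lia) (by lia) fun x hx => ?_
      have := hK x hx
      lia

/-- The `(m + 1)`-st block of the word `wordD n`. -/
def blockWord (n m : ℕ) : List ℕ :=
  n :: (decRun (n - 2) (2 * m + 1) ++ decRun (n - 1) (2 * m + 2))

lemma reaches_blockWord {m : ℕ} (hJ : ∀ x ∈ J, x < a) (hab : a < b) (hma : 2 * m ≤ a) :
    Reaches (blockWord n m) J (insert b (insert a J)) := by
  let y : Fin n := ⟨n - 2, by lia⟩
  let z : Fin n := ⟨n - 1, by lia⟩
  have y_notMem : y ∉ J := fun h => by have := hJ _ h; simp [y, Fin.lt_def] at this; lia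
  have z_notMem : z ∉ J := fun h => by have := hJ _ h; simp [z, Fin.lt_def] at this; lia
  have create : PfaffianMove n J (insert y (insert z J)) :=
    .create (by simp [y, z]; lia) (by simp [z]; lia) y_notMem z_notMem
  have first_run : Reaches (decRun (n - 2) (2 * m + 1)) (insert y (insert z J))
      (insert a (insert z J)) := by
    refine reaches_decRun _ (by lia) (by lia) fun x hx => ?_
    obtain rfl | hx := Finset.mem_insert.1 hx
    · simp [z]; lia
    · exact .inl (hJ x hx)
  have second_run : Reaches (decRun (n - 1) (2 * m + 2)) (insert z (insert a J))
      (insert b (insert a J)) := by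
    refine reaches_decRun _ (by lia) (by lia) fun x hx => ?_
    obtain rfl | hx := Finset.mem_insert.1 hx
    · exact .inl hab
    · exact .inl ((hJ x hx).trans hab)
  exact .move create (first_run.append (Finset.insert_comm z a J ▸ second_run))

lemma exists_eq_insert_insert_of_two_le_card (hI : 2 ≤ I.card) :
    ∃ (a b : Fin n) (J : Finset (Fin n)), a < b ∧ (∀ x ∈ J, x < a) ∧ J.card + 2 = I.card ∧
      insert b (insert a J) = I := by
  have hI₀ : I.Nonempty := Finset.card_pos.1 (by lia)
  let I' := I.erase (I.max' hI₀)
  have card_I' : I'.card + 1 = I.card := Finset.card_erase_add_one (I.max'_mem hI₀)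
  have hI' : I'.Nonempty := Finset.card_pos.1 (by lia)
  have card_J : (I'.erase (I'.max' hI')).card + 1 = I'.card :=
    Finset.card_erase_add_one (I'.max'_mem hI')
  refine ⟨I'.max' hI', I.max' hI₀, I'.erase (I'.max' hI'),
    I.lt_max'_of_mem_erase_max' hI₀ (I'.max'_mem hI'), fun x => I'.lt_max'_of_mem_erase_max' hI',
    by lia, ?_⟩
  rw [Finset.insert_erase (I'.max'_mem hI'), Finset.insert_erase (I.max'_mem hI₀)]

lemma reaches_flatten_map_blockWord {M : ℕ} (even : Even I.card) (hI : I.card ≤ 2 * M) :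
    Reaches ((List.range M).map (blockWord n)).flatten ∅ I := by
  induction M generalizing I with
  | zero =>
    obtain rfl : I = ∅ := Finset.card_eq_zero.1 (by lia)
    exact .refl _ _
  | succ M ih =>
    rw [List.range_succ, List.map_append, List.flatten_append, List.map_singleton,
      List.flatten_singleton]
    obtain h | h := le_or_gt I.card (2 * M)
    · exact (ih even h).append (.refl _ _)
    · have card_eq : I.card = 2 * M + 2 := by grind
      obtain ⟨a, b, J, hab, hJ, hJI, rfl⟩ :=
        exists_eq_insert_insert_of_two_le_card (I := I) (by lia)
      have hJcard : J.card = 2 * M := by lia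
      exact (ih (by simp [hJcard]) hJcard.le).append
        (reaches_blockWord hJ hab (hJcard ▸ card_le_of_forall_lt hJ))

lemma reaches_wordD (even : Even I.card) : Reaches (wordD n) ∅ I := by
  refine reaches_flatten_map_blockWord even ?_
  have := I.card_le_univ
  rw [Fintype.card_fin] at this
  grind

lemma length_flatten_map_blockWord {M : ℕ} (hM : 2 * M ≤ n) :
    ((List.range M).map (blockWord n)).flatten.length + M * (2 * M + 1) = 2 * M * n := by
  induction M with
  | zero => simp
  | succ M ih =>
    have length_blockWord : (blockWord n M).length + 4 * M + 3 = 2 * n := by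
      simp only [blockWord, List.length_cons, List.length_append, length_decRun]
      lia
    rw [List.range_succ, List.map_append, List.flatten_append, List.length_append,
      List.map_singleton, List.flatten_singleton]
    linarith [ih (by lia)]

lemma length_wordD (n : ℕ) : (wordD n).length = Npar n := by
  have h : (wordD n).length + _ = _ := length_flatten_map_blockWord (Nat.mul_div_le n 2)
  rw [Npar]
  obtain ⟨k, rfl | rfl⟩ := n.even_or_odd'
  · rw [Nat.mul_div_cancel_left _ two_pos] at h
    rw [mul_assoc, Nat.mul_div_cancel_left _ two_pos, Nat.mul_sub_one]
    zify [show k ≤ k * (2 * k) by nlinarith] at h ⊢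
    linarith
  · rw [show (2 * k + 1) / 2 = k by lia] at h
    rw [Nat.add_sub_cancel, mul_left_comm, Nat.mul_div_cancel_left _ two_pos]
    linarith

lemma mem_Icc_of_mem_wordD {i : ℕ} (hi : i ∈ wordD n) : i ∈ Set.Icc 1 n := by
  simp only [wordD, List.mem_flatten, List.mem_map, List.mem_range] at hi
  obtain ⟨_, ⟨m, hm, rfl⟩, hi⟩ := hi
  simp only [List.mem_cons, List.mem_append, mem_decRun] at hi
  rw [Set.mem_Icc]
  lia

end Moves

section BlockAction

variable {ι R : Type*} [Fintype ι] [DecidableEq ι] [CommRing R]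

/-- The block upper triangular matrices with invertible upper left block. -/
def parabolic (ι R : Type*) [Fintype ι] [DecidableEq ι] [CommRing R] :
    Submonoid (Matrix (ι ⊕ ι) (ι ⊕ ι) R) where
  carrier := {x | x.toBlocks₂₁ = 0 ∧ IsUnit x.toBlocks₁₁.det}
  one_mem' := by simp [← fromBlocks_one]
  mul_mem' {x y} hx hy := by
    rw [← fromBlocks_toBlocks x, ← fromBlocks_toBlocks y]
    simp [fromBlocks_multiply, hx.1, hy.1, hx.2, hy.2]

/-- The right action of the block upper triangular matrices on row spaces in the chart
`A ↦ [1 | A]`: the row space of `[1 | A] * x` is that of `[1 | blockAct x A]`. -/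
def blockAct (x : Matrix (ι ⊕ ι) (ι ⊕ ι) R) (A : Matrix ι ι R) : Matrix ι ι R :=
  x.toBlocks₁₁⁻¹ * (x.toBlocks₁₂ + A * x.toBlocks₂₂)

lemma blockAct_one (A : Matrix ι ι R) : blockAct 1 A = A := by
  simp [blockAct, ← fromBlocks_one]

lemma blockAct_mul {x y : Matrix (ι ⊕ ι) (ι ⊕ ι) R} (hx : x ∈ parabolic ι R)
    (hy : y ∈ parabolic ι R) (A : Matrix ι ι R) :
    blockAct (x * y) A = blockAct y (blockAct x A) := by
  obtain ⟨hx₂₁, hx₁₁⟩ := hx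
  obtain ⟨hy₂₁, -⟩ := hy
  rw [← fromBlocks_toBlocks x, ← fromBlocks_toBlocks y]
  simp only [blockAct, fromBlocks_multiply, hx₂₁, hy₂₁, toBlocks_fromBlocks₁₁,
    toBlocks_fromBlocks₁₂, toBlocks_fromBlocks₂₂, Matrix.mul_zero, Matrix.zero_mul, add_zero,
    zero_add, Matrix.mul_inv_rev, Matrix.mul_add, Matrix.add_mul, Matrix.mul_assoc]
  rw [nonsing_inv_mul_cancel_left _ _ hx₁₁]
  abel

variable {n : ℕ} {a b : Fin n}

/-- Splits `{1, …, 2n}` into its first and last `n` elements. -/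
def blockIndex (n : ℕ) : Fin n ⊕ Fin n ≃ Fin (2 * n) :=
  finSumFinEquiv.trans (finCongr (two_mul n).symm)

lemma val_blockIndex_inl (p : Fin n) : (blockIndex n (.inl p) : ℕ) = p := rfl

lemma val_blockIndex_inr (p : Fin n) : (blockIndex n (.inr p) : ℕ) = n + p := rfl

/-- The generator `x_i(t)` as a `2 × 2` block matrix. -/
def xBlock (n i : ℕ) (t : ℝ) : Matrix (Fin n ⊕ Fin n) (Fin n ⊕ Fin n) ℝ :=
  (xMat n i t).submatrix (blockIndex n) (blockIndex n)

lemma xBlock_of_lt (hab : (a : ℕ) + 1 = b) (t : ℝ) :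
    xBlock n b t = fromBlocks (transvection a b t) 0 0 (transvection b a (-t)) := by
  ext (p | p) (q | q) <;>
    simp [xBlock, xMat, val_blockIndex_inl, val_blockIndex_inr, transvection, single_apply,
      one_apply, Fin.ext_iff] <;> grind

lemma xBlock_self (hab : (a : ℕ) + 1 = b) (hbn : (b : ℕ) + 1 = n) (t : ℝ) :
    xBlock n n t = fromBlocks 1 (single a b t - single b a t) 0 1 := by
  ext (p | p) (q | q) <;>
    simp [xBlock, xMat, val_blockIndex_inl, val_blockIndex_inr, single_apply, one_apply,
      Fin.ext_iff] <;> grind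

lemma exists_succ_eq_of_mem_Icc {i : ℕ} (hn : 2 ≤ n) (hi : i ∈ Set.Icc 1 n) :
    ∃ a b : Fin n, (a : ℕ) + 1 = b ∧ (i = b ∨ (b : ℕ) + 1 = n ∧ i = n) := by
  have hi₁ := hi.1
  obtain rfl | h := hi.2.eq_or_lt
  · exact ⟨⟨i - 2, by lia⟩, ⟨i - 1, by lia⟩, by simp; lia, .inr ⟨by simp; lia, rfl⟩⟩
  · exact ⟨⟨i - 1, by lia⟩, ⟨i, h⟩, by simp; lia, .inl rfl⟩

lemma xBlock_mem_parabolic {i : ℕ} (hn : 2 ≤ n) (hi : i ∈ Set.Icc 1 n) (t : ℝ) :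
    xBlock n i t ∈ parabolic (Fin n) ℝ := by
  obtain ⟨a, b, hab, rfl | ⟨hbn, rfl⟩⟩ := exists_succ_eq_of_mem_Icc hn hi
  · have a_ne_b : a ≠ b := by lia
    rw [xBlock_of_lt hab]
    exact ⟨rfl, by simp [det_transvection_of_ne _ _ a_ne_b]⟩
  · rw [xBlock_self hab hbn]
    exact ⟨rfl, by simp⟩

lemma blockAct_xBlock_of_lt (hab : (a : ℕ) + 1 = b) (t : ℝ) (A : Matrix (Fin n) (Fin n) ℝ) :
    blockAct (xBlock n b t) A = transvection a b (-t) * A * transvection b a (-t) := by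
  have a_ne_b : a ≠ b := by lia
  have inv_eq : (transvection a b t)⁻¹ = transvection a b (-t) :=
    inv_eq_left_inv (by simp [transvection_mul_transvection_same _ _ a_ne_b])
  simp [blockAct, xBlock_of_lt hab, inv_eq, Matrix.mul_assoc]

lemma blockAct_xBlock_self (hab : (a : ℕ) + 1 = b) (hbn : (b : ℕ) + 1 = n) (t : ℝ)
    (A : Matrix (Fin n) (Fin n) ℝ) :
    blockAct (xBlock n n t) A = A + (single a b t - single b a t) := by
  simp [blockAct, xBlock_self hab hbn, add_comm]

/-- The letters of `wordD n` paired with the parameters of the corresponding generators. -/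
def wordParams (n : ℕ) (t : ℕ → ℝ) : List (ℕ × ℝ) :=
  (List.range (Npar n)).map fun l => ((wordD n).getD l 0, t l)

lemma map_fst_wordParams (n : ℕ) (t : ℕ → ℝ) : (wordParams n t).map Prod.fst = wordD n := by
  refine List.ext_getElem (by simp [wordParams, length_wordD]) fun l _ hl => ?_
  simp [wordParams, hl]

lemma mem_Icc_and_pos_of_mem_wordParams {t : ℕ → ℝ} (ht : ∀ l < Npar n, 0 < t l) :
    ∀ x ∈ wordParams n t, x.1 ∈ Set.Icc 1 n ∧ 0 < x.2 := by
  refine fun x hx => ⟨mem_Icc_of_mem_wordD (map_fst_wordParams n t ▸ List.mem_map_of_mem hx), ?_⟩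
  obtain ⟨l, hl, rfl⟩ := List.mem_map.1 hx
  exact ht l (List.mem_range.1 hl)

lemma Amat_eq_blockAct (n : ℕ) (t : ℕ → ℝ) :
    Amat n t = blockAct ((wordParams n t).map fun x => xBlock n x.1 x.2).prod 0 := by
  have prod_eq : ((wordParams n t).map fun x => xBlock n x.1 x.2).prod =
      (prodX n t).submatrix (blockIndex n) (blockIndex n) := by
    refine .trans ?_ (map_list_prod (reindexAlgEquiv ℝ ℝ (blockIndex n).symm) _).symm
    rw [wordParams, List.map_map, List.map_map]
    rfl
  rw [prod_eq, blockAct, Matrix.zero_mul, add_zero]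
  rfl

end BlockAction

section Positivity

variable {n i : ℕ} {I J : Finset (Fin n)} {A : Matrix (Fin n) (Fin n) ℝ}

lemma signedPf_blockAct_xBlock_of_move (hJI : PfaffianMove i J I) (even : Even J.card) (t : ℝ) :
    signedPf (blockAct (xBlock n i t) A) I = signedPf A I + t * signedPf A J := by
  induction hJI with
  | slide hab ha hb =>
    rw [blockAct_xBlock_of_lt hab, signedPf_transvection_insert A hab ha hb even]
  | create hab hbn ha hb =>
    rw [blockAct_xBlock_self hab hbn,
      signedPf_add_single_sub_single_insert A hab hbn ha hb even]

lemma signedPf_blockAct_xBlock_of_forall_not_move (hn : 2 ≤ n) (hi : i ∈ Set.Icc 1 n)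
    (no_move : ∀ J, ¬PfaffianMove i J I) (even : Even I.card) (t : ℝ) :
    signedPf (blockAct (xBlock n i t) A) I = signedPf A I := by
  refine congrArg (sgnSet I * ·) ?_
  obtain ⟨a, b, hab, rfl | ⟨hbn, rfl⟩⟩ := exists_succ_eq_of_mem_Icc hn hi
  · rw [blockAct_xBlock_of_lt hab]
    by_cases ha : a ∈ I
    · have hb : b ∈ I := by
        by_contra hb
        have := PfaffianMove.slide (K := I.erase a) hab (by simp) (by simp [hb])
        exact no_move _ (Finset.insert_erase ha ▸ this)
      exact PfI_transvection_of_mem_of_mem A (by lia) ha hb even _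
    · exact PfI_transvection_of_notMem A ha _
  · rw [blockAct_xBlock_self hab hbn]
    refine PfI_add_single_sub_single_of_notMem A ?_ t
    by_contra! h
    have := PfaffianMove.create (K := (I.erase a).erase b) hab hbn (by simp) (by simp)
    rw [Finset.insert_erase (by grind), Finset.insert_erase h.1] at this
    exact no_move _ this

/-- The weak form of the conclusion, which every generator with positive parameter preserves. -/
def PfaffianNonneg (A : Matrix (Fin n) (Fin n) ℝ) : Prop :=
  ∀ I : Finset (Fin n), Even I.card → 0 ≤ signedPf A I

lemma pfaffianNonneg_zero : PfaffianNonneg (0 : Matrix (Fin n) (Fin n) ℝ) := by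
  intro I even
  obtain rfl | hI := I.eq_empty_or_nonempty
  · simp [signedPf_empty]
  · exact (signedPf_zero hI even).ge

lemma PfaffianNonneg.signedPf_le_blockAct_xBlock (hA : PfaffianNonneg A) (hn : 2 ≤ n)
    (hi : i ∈ Set.Icc 1 n) {t : ℝ} (ht : 0 ≤ t) (even : Even I.card) :
    signedPf A I ≤ signedPf (blockAct (xBlock n i t) A) I := by
  by_cases h : ∃ J, PfaffianMove i J I
  · obtain ⟨J, hJI⟩ := h
    have evenJ := hJI.even_card_iff.2 even
    rw [signedPf_blockAct_xBlock_of_move hJI evenJ]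
    exact le_add_of_nonneg_right (mul_nonneg ht (hA J evenJ))
  · push Not at h
    exact (signedPf_blockAct_xBlock_of_forall_not_move hn hi h even t).ge

lemma PfaffianNonneg.blockAct_xBlock (hA : PfaffianNonneg A) (hn : 2 ≤ n)
    (hi : i ∈ Set.Icc 1 n) {t : ℝ} (ht : 0 ≤ t) : PfaffianNonneg (blockAct (xBlock n i t) A) :=
  fun I even => (hA I even).trans (hA.signedPf_le_blockAct_xBlock hn hi ht even)

lemma PfaffianNonneg.signedPf_blockAct_pos (hA : PfaffianNonneg A) (hn : 2 ≤ n)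
    {L : List (ℕ × ℝ)} (hL : ∀ x ∈ L, x.1 ∈ Set.Icc 1 n ∧ 0 < x.2)
    (reaches : Reaches (L.map Prod.fst) J I) (even : Even J.card) (pos : 0 < signedPf A J) :
    0 < signedPf (blockAct (L.map fun x => xBlock n x.1 x.2).prod A) I := by
  induction L generalizing A J with
  | nil =>
    cases reaches
    simpa [blockAct_one]
  | cons x L ih =>
    obtain ⟨⟨hi, ht⟩, hL'⟩ := List.forall_mem_cons.1 hL
    have prod_mem : (L.map fun x => xBlock n x.1 x.2).prod ∈ parabolic (Fin n) ℝ :=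
      Submonoid.list_prod_mem _ <| List.forall_mem_map.2 fun y hy =>
        xBlock_mem_parabolic hn (hL' y hy).1 y.2
    rw [List.map_cons, List.prod_cons, blockAct_mul (xBlock_mem_parabolic hn hi x.2) prod_mem]
    have hA' := hA.blockAct_xBlock hn hi ht.le
    cases reaches with
    | skip _ reaches =>
      exact ih hA' hL' reaches even (pos.trans_le (hA.signedPf_le_blockAct_xBlock hn hi ht.le even))
    | @move _ _ _ K _ hJK hKI =>
      have evenK := hJK.even_card_iff.1 even
      refine ih hA' hL' hKI evenK ?_
      rw [signedPf_blockAct_xBlock_of_move hJK even]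
      exact add_pos_of_nonneg_of_pos (hA K evenK) (mul_pos ht pos)

end Positivity

/-- For `A ∈ S_n^{>0}` and `I ⊆ {1,…,n}` of even size,
`sgn(I,[n]) · Pf_I(A) > 0`. -/
theorem pfaffian_sign_of_totally_positive (n : ℕ) (hn : 2 ≤ n)
    (A : Matrix (Fin n) (Fin n) ℝ) (hA : A ∈ Spos n)
    (I : Finset (Fin n)) (hI : Even I.card) :
    0 < sgnSet I * PfI A I := by
  obtain ⟨t, ht, rfl⟩ := hA
  have reaches : Reaches ((wordParams n t).map Prod.fst) ∅ I :=
    map_fst_wordParams n t ▸ reaches_wordD hI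
  have pos_empty : 0 < signedPf (0 : Matrix (Fin n) (Fin n) ℝ) ∅ := signedPf_empty 0 ▸ one_pos
  rw [Amat_eq_blockAct]
  exact pfaffianNonneg_zero.signedPf_blockAct_pos hn (mem_Icc_and_pos_of_mem_wordParams ht)
    reaches (by simp) pos_empty
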